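/- arXiv:2603.19506 — 3 statements merged into one kernel-verified Lean document; each statement's English description precedes it below -/
import Mathlib

section
/- Let K ≥ 2 be an integer, α > 1, S ≥ K^α a real number, B ≥ α·log K/(K^α − K), and let k₂, k₁₂ be integers with 2 ≤ k₂ ≤ K and 2 ≤ k₁₂ ≤ K. Then t := k₁₂·(k₂B + log S)/S satisfies k₂B/S ≤ t ≤ k₁₂·B. Moreover, B* := α·log K/(K^α − K) is the supremum over all x ≥ K^α of log x/(x − K), so the condition B ≥ B* is also necessary for the upper bound t ≤ k₁₂·B to hold uniformly over all S ≥ K^α. -/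
/-- Let `K ≥ 2` be an integer, `α > 1`, `S ≥ K^α`, `B ≥ α·log K/(K^α − K)`, and
`k₂, k₁₂` integers with `2 ≤ k₂, k₁₂ ≤ K`.  Then `t := k₁₂·(k₂·B + log S)/S` satisfies
`k₂·B/S ≤ t ≤ k₁₂·B`.  Moreover `B* := α·log K/(K^α − K)` is the supremum over all
`x ≥ K^α` of `log x/(x − K)`, so `B ≥ B*` is also necessary for the upper bound to hold
uniformly over all `S ≥ K^α` (and all admissible `k₂, k₁₂`). -/
theorem choice_t_bounds (K : ℕ) (hK : 2 ≤ K) (α : ℝ) (hα : 1 < α)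
    (S : ℝ) (hS : (K : ℝ) ^ α ≤ S)
    (B : ℝ) (hB : α * Real.log K / ((K : ℝ) ^ α - K) ≤ B)
    (k₂ k₁₂ : ℕ) (hk₂ : 2 ≤ k₂) (hk₂' : k₂ ≤ K) (hk₁₂ : 2 ≤ k₁₂) (hk₁₂' : k₁₂ ≤ K) :
    ((k₂ : ℝ) * B / S ≤ (k₁₂ : ℝ) * ((k₂ : ℝ) * B + Real.log S) / S ∧
      (k₁₂ : ℝ) * ((k₂ : ℝ) * B + Real.log S) / S ≤ (k₁₂ : ℝ) * B) ∧
    IsLUB {y : ℝ | ∃ x : ℝ, (K : ℝ) ^ α ≤ x ∧ y = Real.log x / (x - K)}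
      (α * Real.log K / ((K : ℝ) ^ α - K)) ∧
    (∀ B' : ℝ,
      (∀ S' : ℝ, (K : ℝ) ^ α ≤ S' →
        ∀ k₂' k₁₂' : ℕ, 2 ≤ k₂' → k₂' ≤ K → 2 ≤ k₁₂' → k₁₂' ≤ K →
          (k₁₂' : ℝ) * ((k₂' : ℝ) * B' + Real.log S') / S' ≤ (k₁₂' : ℝ) * B') →
      α * Real.log K / ((K : ℝ) ^ α - K) ≤ B') := by
  have hK1 : (2 : ℝ) ≤ K := by exact_mod_cast hK
  have hK0 : (0 : ℝ) < K := by linarith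
  have hlogK : 0 < Real.log K := Real.log_pos (by linarith)
  have haK : (K : ℝ) < (K : ℝ) ^ α := by
    have h := Real.rpow_lt_rpow_of_exponent_lt (x := (K : ℝ)) (by linarith) hα
    rwa [Real.rpow_one] at h
  have hla : Real.log ((K : ℝ) ^ α) = α * Real.log K := Real.log_rpow hK0 α
  rw [← hla] at hB ⊢
  set a : ℝ := (K : ℝ) ^ α with ha
  have ha0 : 0 < a := by linarith
  have haK' : 0 < a - K := by linarith
  have key : ∀ x : ℝ, a ≤ x → Real.log x / (x - K) ≤ Real.log a / (a - K) := by
    intro x hx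
    have hxK : 0 < x - K := by linarith
    have hx0 : 0 < x := by linarith
    rw [div_le_div_iff₀ hxK haK']
    have h1 : Real.log x ≤ Real.log a + (x / a - 1) := by
      have h := Real.log_le_sub_one_of_pos (div_pos hx0 ha0)
      rw [Real.log_div hx0.ne' ha0.ne'] at h
      linarith
    have h2 : (a - K) / a ≤ Real.log a := by
      have h := Real.one_sub_inv_le_log_of_pos ha0
      have h3 : (a - K) / a ≤ 1 - a⁻¹ := by
        rw [div_le_iff₀ ha0, sub_mul, inv_mul_cancel₀ ha0.ne']
        linarith
      linarith
    calc Real.log x * (a - K) ≤ (Real.log a + (x / a - 1)) * (a - K) :=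
          mul_le_mul_of_nonneg_right h1 haK'.le
      _ = Real.log a * (a - K) + (a - K) / a * (x - a) := by field_simp
      _ ≤ Real.log a * (a - K) + Real.log a * (x - a) := by
          have := mul_le_mul_of_nonneg_right h2 (sub_nonneg.2 hx)
          linarith
      _ = Real.log a * (x - K) := by ring
  have hloga : 0 < Real.log a := Real.log_pos (by linarith)
  have hB0 : 0 < B := lt_of_lt_of_le (div_pos hloga haK') hB
  have hS0 : 0 < S := by linarith
  have hlogS : 0 < Real.log S := Real.log_pos (by linarith)
  have hk2r : (k₂ : ℝ) ≤ K := by exact_mod_cast hk₂'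
  have hk2p : (2 : ℝ) ≤ k₂ := by exact_mod_cast hk₂
  have hk12p : (2 : ℝ) ≤ k₁₂ := by exact_mod_cast hk₁₂
  refine ⟨⟨?_, ?_⟩, ⟨?_, ?_⟩, ?_⟩
  · apply div_le_div_of_nonneg_right _ hS0.le
    have h : 0 ≤ (k₂ : ℝ) * B := by positivity
    nlinarith
  · rw [div_le_iff₀ hS0, mul_assoc]
    apply mul_le_mul_of_nonneg_left _ (by linarith)
    have h := (key S hS).trans hB
    rw [div_le_iff₀ (by linarith)] at h
    have h' := mul_le_mul_of_nonneg_right hk2r hB0.le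
    linarith
  · rintro y ⟨x, hx, rfl⟩
    exact key x hx
  · intro u hu
    exact hu ⟨a, le_refl a, rfl⟩
  · intro B' h
    have h := h a le_rfl K K hK le_rfl hK le_rfl
    rw [div_le_iff₀ ha0, mul_assoc] at h
    have h := le_of_mul_le_mul_left h hK0
    rw [div_le_iff₀ haK']
    linarith
end

section
/- Let K ≥ 2 be an integer and let B > 0, S > 1, c > 0 be real numbers satisfying B > (log K)/(2c) and c·(log S + 2B) > log K. Then the double sum Σ_{k₂=2}^{K} Σ_{k₁₂=2}^{K} K^{k₂+k₁₂} · exp(−c·k₁₂·(k₂B + log S)) is at most [K²/(1 − K·e^{−2cB})] · q²/(1 − q), where q := K·S^{−c}·e^{−2cB} (the hypotheses guarantee K·e^{−2cB} < 1 and q < 1). -/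
/-- Geometric-sum bound: for an integer `K ≥ 2` and reals `B > 0`, `S > 1`, `c > 0` with
`B > log K/(2c)` and `c·(log S + 2B) > log K`, the double sum
`Σ_{k₂=2}^{K} Σ_{k₁₂=2}^{K} K^{k₂+k₁₂}·exp(−c·k₁₂·(k₂B + log S))` is at most
`(K²/(1 − K·e^{−2cB})) · q²/(1 − q)` where `q := K·S^{−c}·e^{−2cB}`. -/
theorem double_geometric_sum_bound (K : ℕ) (hK : 2 ≤ K) (B S c : ℝ)
    (hB : 0 < B) (hS : 1 < S) (hc : 0 < c)
    (h1 : Real.log K / (2 * c) < B)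
    (h2 : Real.log K < c * (Real.log S + 2 * B)) :
    ∑ k₂ ∈ Finset.Icc 2 K, ∑ k₁₂ ∈ Finset.Icc 2 K,
        (K : ℝ) ^ (k₂ + k₁₂) *
          Real.exp (-(c * (k₁₂ : ℝ) * ((k₂ : ℝ) * B + Real.log S))) ≤
      ((K : ℝ) ^ 2 / (1 - (K : ℝ) * Real.exp (-(2 * c * B)))) *
        (((K : ℝ) * S ^ (-c) * Real.exp (-(2 * c * B))) ^ 2 /
          (1 - (K : ℝ) * S ^ (-c) * Real.exp (-(2 * c * B)))) := by
  have hKpos : (0 : ℝ) < K := by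
    have : 0 < K := by omega
    exact_mod_cast this
  have hSpos : 0 < S := by linarith
  have hSc : S ^ (-c) = Real.exp (-(c * Real.log S)) := by
    rw [Real.rpow_def_of_pos hSpos]; congr 1; ring
  have hKe : (K : ℝ) = Real.exp (Real.log K) := (Real.exp_log hKpos).symm
  have hr0 : 0 ≤ (K : ℝ) * Real.exp (-(2 * c * B)) := by positivity
  have hq0 : 0 ≤ (K : ℝ) * S ^ (-c) * Real.exp (-(2 * c * B)) := by positivity
  have hr1 : (K : ℝ) * Real.exp (-(2 * c * B)) < 1 := by
    rw [div_lt_iff₀ (by positivity)] at h1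
    rw [hKe, ← Real.exp_add, Real.exp_lt_one_iff]
    linarith
  have hq1 : (K : ℝ) * S ^ (-c) * Real.exp (-(2 * c * B)) < 1 := by
    rw [hSc, hKe, ← Real.exp_add, ← Real.exp_add, Real.exp_lt_one_iff]
    linarith
  have hterm : ∀ i j : ℕ, (K : ℝ) ^ ((2 + i) + (2 + j)) *
      Real.exp (-(c * ((2 + j : ℕ) : ℝ) * (((2 + i : ℕ) : ℝ) * B + Real.log S))) ≤
      ((K : ℝ) ^ 2 * ((K : ℝ) * Real.exp (-(2 * c * B))) ^ i) *
        (((K : ℝ) * S ^ (-c) * Real.exp (-(2 * c * B))) ^ 2 *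
          ((K : ℝ) * S ^ (-c) * Real.exp (-(2 * c * B))) ^ j) := by
    intro i j
    have e : ((K : ℝ) ^ 2 * ((K : ℝ) * Real.exp (-(2 * c * B))) ^ i) *
        (((K : ℝ) * S ^ (-c) * Real.exp (-(2 * c * B))) ^ 2 *
          ((K : ℝ) * S ^ (-c) * Real.exp (-(2 * c * B))) ^ j) =
        (K : ℝ) ^ ((2 + i) + (2 + j)) * Real.exp ((i : ℝ) * (-(2 * c * B)) +
          ((2 + j : ℕ) : ℝ) * (-(c * Real.log S)) + ((2 + j : ℕ) : ℝ) * (-(2 * c * B))) := by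
      rw [hSc, Real.exp_add, Real.exp_add, Real.exp_nat_mul, Real.exp_nat_mul, Real.exp_nat_mul]
      ring
    rw [e]
    apply mul_le_mul_of_nonneg_left _ (by positivity)
    apply Real.exp_le_exp.mpr
    have h : 0 ≤ c * B * ((i : ℝ) * j) := by positivity
    push_cast
    linarith
  have hsum : ∀ f : ℕ → ℝ, ∑ k ∈ Finset.Icc 2 K, f k = ∑ i ∈ Finset.range (K - 1), f (2 + i) := by
    intro f
    have : Finset.Icc 2 K = Finset.Ico 2 (K + 1) := by ext; simp
    rw [this, Finset.sum_Ico_eq_sum_range]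
    rfl
  have hgeom : ∀ r : ℝ, 0 ≤ r → r < 1 → ∑ i ∈ Finset.range (K - 1), r ^ i ≤ (1 - r)⁻¹ := by
    intro r h0 h1
    rw [← tsum_geometric_of_lt_one h0 h1]
    exact (summable_geometric_of_lt_one h0 h1).sum_le_tsum _ (fun i _ => pow_nonneg h0 i)
  simp only [hsum]
  refine (Finset.sum_le_sum fun i _ => Finset.sum_le_sum fun j _ => hterm i j).trans ?_
  rw [← Finset.sum_mul_sum, ← Finset.mul_sum, ← Finset.mul_sum, div_eq_mul_inv, div_eq_mul_inv]
  have g1 := hgeom _ hr0 hr1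
  have g2 := hgeom _ hq0 hq1
  have p1 : 0 ≤ (1 - (K : ℝ) * Real.exp (-(2 * c * B)))⁻¹ := inv_nonneg.mpr (by linarith)
  apply mul_le_mul
  · exact mul_le_mul_of_nonneg_left g1 (by positivity)
  · exact mul_le_mul_of_nonneg_left g2 (by positivity)
  · exact mul_nonneg (pow_nonneg hq0 2) (Finset.sum_nonneg fun j _ => pow_nonneg hq0 j)
  · exact mul_nonneg (by positivity) p1
end

section
/- Let Σ be an n×n real symmetric positive definite matrix, X₁ ∈ ℝⁿ nonzero, P an n×n permutation matrix, and X₁₂ := P X₁. Define ‖T‖² := ‖X₁₂‖²_{Σ⁻¹} − ⟨X₁₂, X₁⟩²_{Σ⁻¹}/‖X₁‖²_{Σ⁻¹}. Then λ_min(Σ⁻¹)·min_{α∈ℝ}‖P X₁ − α X₁‖₂² ≤ ‖T‖² ≤ λ_max(Σ⁻¹)·min_{α∈ℝ}‖P X₁ − α X₁‖₂², and the inner minimum admits the explicit form min_{α∈ℝ}‖P X₁ − α X₁‖₂² = ‖P X₁‖₂² − (X₁ᵀ P X₁)²/‖X₁‖₂². -/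
open Matrix

noncomputable section

/-- Largest element of the real spectrum (set of eigenvalues) of a matrix. -/
def eigMax {n : ℕ} (A : Matrix (Fin n) (Fin n) ℝ) : ℝ := sSup (spectrum ℝ A)

/-- Smallest element of the real spectrum of a matrix. -/
def eigMin {n : ℕ} (A : Matrix (Fin n) (Fin n) ℝ) : ℝ := sInf (spectrum ℝ A)

/-- The weighted inner product `⟨a, b⟩_{Σ⁻¹} := aᵀ Σ⁻¹ b`. -/
def wip {n : ℕ} (S : Matrix (Fin n) (Fin n) ℝ) (a b : Fin n → ℝ) : ℝ :=
  a ⬝ᵥ (S⁻¹).mulVec b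

lemma aux_lower {n : ℕ} (A : Matrix (Fin n) (Fin n) ℝ) (hA : A.IsHermitian) (v : Fin n → ℝ) :
    eigMin A * (v ⬝ᵥ v) ≤ v ⬝ᵥ A.mulVec v := by
  have hB : (A - algebraMap ℝ _ (eigMin A)).PosSemidef := by
    rw [Matrix.posSemidef_iff_isHermitian_and_spectrum_nonneg]
    refine ⟨hA.sub ?_, ?_⟩
    · rw [Algebra.algebraMap_eq_smul_one]
      simp [Matrix.IsHermitian]
    · intro r hr
      rw [← spectrum.sub_singleton_eq] at hr
      obtain ⟨a, ha, b, hb, rfl⟩ := hr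
      rw [Set.mem_singleton_iff] at hb
      subst hb
      have := csInf_le (Set.Finite.bddBelow (Matrix.finite_real_spectrum (A := A))) ha
      simp only [eigMin, Set.mem_setOf_eq]
      linarith
  have h := hB.dotProduct_mulVec_nonneg v
  rw [Algebra.algebraMap_eq_smul_one] at h
  simp [Matrix.sub_mulVec, Matrix.smul_mulVec, dotProduct_sub] at h
  linarith

lemma aux_upper {n : ℕ} (A : Matrix (Fin n) (Fin n) ℝ) (hA : A.IsHermitian) (v : Fin n → ℝ) :
    v ⬝ᵥ A.mulVec v ≤ eigMax A * (v ⬝ᵥ v) := by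
  have hB : (algebraMap ℝ _ (eigMax A) - A).PosSemidef := by
    rw [Matrix.posSemidef_iff_isHermitian_and_spectrum_nonneg]
    refine ⟨Matrix.IsHermitian.sub ?_ hA, ?_⟩
    · rw [Algebra.algebraMap_eq_smul_one]
      simp [Matrix.IsHermitian]
    · intro r hr
      rw [← spectrum.singleton_sub_eq] at hr
      obtain ⟨b, hb, a, ha, rfl⟩ := hr
      rw [Set.mem_singleton_iff] at hb
      subst hb
      have := le_csSup (Set.Finite.bddAbove (Matrix.finite_real_spectrum (A := A))) ha
      simp only [eigMax, Set.mem_setOf_eq]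
      linarith
  have h := hB.dotProduct_mulVec_nonneg v
  rw [Algebra.algebraMap_eq_smul_one] at h
  simp [Matrix.sub_mulVec, Matrix.smul_mulVec, dotProduct_sub] at h
  linarith

lemma aux_eigMin_nonneg {n : ℕ} (A : Matrix (Fin n) (Fin n) ℝ) (hA : A.PosSemidef) :
    0 ≤ eigMin A := by
  rw [Matrix.posSemidef_iff_isHermitian_and_spectrum_nonneg] at hA
  exact Real.sInf_nonneg fun x hx => hA.2 hx

/-- Expansion of a symmetric quadratic form along a line. -/
lemma aux_expand {n : ℕ} (A : Matrix (Fin n) (Fin n) ℝ) (hA : A.IsHermitian)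
    (u x : Fin n → ℝ) (a : ℝ) :
    (u - a • x) ⬝ᵥ A.mulVec (u - a • x) =
      u ⬝ᵥ A.mulVec u - 2 * a * (u ⬝ᵥ A.mulVec x) + a ^ 2 * (x ⬝ᵥ A.mulVec x) := by
  have h : x ⬝ᵥ A.mulVec u = u ⬝ᵥ A.mulVec x := by
    have hT : Aᵀ = A := by simpa [Matrix.IsHermitian] using hA
    rw [Matrix.dotProduct_mulVec, ← Matrix.mulVec_transpose, hT, dotProduct_comm]
  simp [Matrix.mulVec_sub, Matrix.mulVec_smul, sub_dotProduct, dotProduct_sub, h]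
  ring

/-- Spectral sandwich for `‖T‖² := ‖X₁₂‖²_{Σ⁻¹} − ⟨X₁₂, X₁⟩²_{Σ⁻¹}/‖X₁‖²_{Σ⁻¹}` with
`X₁₂ := P X₁`:
`λ_min(Σ⁻¹)·min_α ‖P X₁ − α X₁‖₂² ≤ ‖T‖² ≤ λ_max(Σ⁻¹)·min_α ‖P X₁ − α X₁‖₂²`,
where the inner minimum equals `‖P X₁‖₂² − (X₁ᵀ P X₁)²/‖X₁‖₂²`. -/
theorem T_sq_spectral_sandwich {n : ℕ} (S : Matrix (Fin n) (Fin n) ℝ) (hS : S.PosDef)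
    (X₁ : Fin n → ℝ) (hX₁ : X₁ ≠ 0)
    (P : Matrix (Fin n) (Fin n) ℝ) (hP : ∃ σ : Equiv.Perm (Fin n), P = σ.permMatrix ℝ)
    (X₁₂ : Fin n → ℝ) (hX₁₂ : X₁₂ = P.mulVec X₁)
    (Tsq : ℝ) (hT : Tsq = wip S X₁₂ X₁₂ - (wip S X₁₂ X₁) ^ 2 / wip S X₁ X₁) :
    eigMin S⁻¹ * ((P.mulVec X₁ ⬝ᵥ P.mulVec X₁) - (X₁ ⬝ᵥ P.mulVec X₁) ^ 2 / (X₁ ⬝ᵥ X₁))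
        ≤ Tsq ∧
      Tsq ≤ eigMax S⁻¹ *
          ((P.mulVec X₁ ⬝ᵥ P.mulVec X₁) - (X₁ ⬝ᵥ P.mulVec X₁) ^ 2 / (X₁ ⬝ᵥ X₁)) ∧
      IsLeast {y : ℝ | ∃ α : ℝ,
          y = (P.mulVec X₁ - α • X₁) ⬝ᵥ (P.mulVec X₁ - α • X₁)}
        ((P.mulVec X₁ ⬝ᵥ P.mulVec X₁) - (X₁ ⬝ᵥ P.mulVec X₁) ^ 2 / (X₁ ⬝ᵥ X₁)) := by
  subst hX₁₂
  set u := P.mulVec X₁ with hu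
  have hpd : (S⁻¹).PosDef := hS.inv
  have hxx : 0 < X₁ ⬝ᵥ X₁ := by
    have := (Matrix.dotProduct_star_self_pos_iff (v := X₁)).2 hX₁
    simpa using this
  have hw : 0 < X₁ ⬝ᵥ (S⁻¹).mulVec X₁ := by simpa using hpd.dotProduct_mulVec_pos hX₁
  have hE : ∀ a : ℝ, (u - a • X₁) ⬝ᵥ (u - a • X₁) =
      u ⬝ᵥ u - 2 * a * (X₁ ⬝ᵥ u) + a ^ 2 * (X₁ ⬝ᵥ X₁) := by
    intro a
    have := aux_expand 1 Matrix.isHermitian_one u X₁ a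
    simp only [Matrix.one_mulVec] at this
    rw [this, dotProduct_comm u X₁]
  have key : ∀ p q r a : ℝ, 0 < r → p - q ^ 2 / r ≤ p - 2 * a * q + a ^ 2 * r := by
    intro p q r a hr
    have : p - 2 * a * q + a ^ 2 * r - (p - q ^ 2 / r) = (a * r - q) ^ 2 / r := by
      field_simp
      ring
    have h2 : 0 ≤ (a * r - q) ^ 2 / r := by positivity
    linarith
  have key2 : ∀ p q r : ℝ, 0 < r → p - q ^ 2 / r = p - 2 * (q / r) * q + (q / r) ^ 2 * r := by
    intro p q r hr
    field_simp
    ring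
  simp only [wip] at hT
  refine ⟨?_, ?_, ⟨(X₁ ⬝ᵥ u) / (X₁ ⬝ᵥ X₁), ?_⟩, ?_⟩
  · rw [hT, key2 _ (u ⬝ᵥ (S⁻¹).mulVec X₁) _ hw, ← aux_expand _ hpd.1]
    refine le_trans ?_ (aux_lower _ hpd.1 _)
    refine mul_le_mul_of_nonneg_left ?_ (aux_eigMin_nonneg _ hpd.posSemidef)
    rw [hE]
    exact key _ _ _ _ hxx
  · rw [hT, key2 (u ⬝ᵥ u) _ _ hxx, ← hE]
    refine le_trans ?_ (aux_upper _ hpd.1 _)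
    rw [aux_expand _ hpd.1]
    exact key _ _ _ _ hw
  · rw [hE]
    exact key2 _ _ _ hxx
  · rintro y ⟨a, rfl⟩
    rw [hE]
    exact key _ _ _ _ hxx

end
end
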